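/- For every natural number n ≥ 0, every integer k ≥ 1, and all pairwise distinct strictly positive real numbers r_0, …, r_{n+k}, one has I_{n+1, n+k}(r_0,…,r_{n+k}) = [(−1)^n / (n! (k−1)!)] · Σ_{i=0}^{n+k} [ ∏_{j=0, j≠i}^{n+k} (r_i − r_j)^{−1} ] · r_i^{k−1} · log r_i. -/

import Mathlib

open MeasureTheory Finset

/-!
The identity is the Hermite–Genocchi formula for `f(x) = x^(k-1) log x`, whose `(n+k)`-th derivative
on `(0, ∞)` is `(-1)^n n! (k-1)! x^(-(n+1))` (`exists_derivs`).

The Hermite–Genocchi formula (`hermite_genocchi`) says that the integral of `f^(m)` over the simplex,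
evaluated at the point `r_0 + Σ s_i (r_i - r_(i-1))`, equals the divided difference `f[r_0,…,r_m]`.
It is proved by induction on `m`: integrating out the innermost variable `s_m ∈ [0, s_(m-1)]`
by the fundamental theorem of calculus (`integral_simplex_succ`) yields the difference quotient of two
integrals over the simplex of dimension one less, one with `r_m` dropped and one with `r_(m-1)`
dropped. Divided differences obey the same recursion (`divDiff_succ`).
-/

/-- The `k`-simplex `Δ_k = {s : 0 ≤ s_k ≤ ⋯ ≤ s_1 ≤ 1}` (indices shifted to `0,…,k-1`). -/
def simplexSet (k : ℕ) : Set (Fin k → ℝ) :=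
  {s | (∀ i, 0 ≤ s i) ∧ (∀ i, s i ≤ 1) ∧ ∀ i j : Fin k, i ≤ j → s j ≤ s i}

/-- `I_{α,k}(r_0,…,r_k)`: for `k ≥ 1` the integral over the simplex `Δ_k` of
`[(1-s_1)r_0 + (s_1-s_2)r_1 + ⋯ + s_k r_k]^{-α} = [r_0 + Σ_i s_i (r_i - r_{i-1})]^{-α}`,
and `I_{α,0}(r_0) = r_0^{-α}`. -/
noncomputable def heatI (α : ℝ) : (k : ℕ) → (Fin (k + 1) → ℝ) → ℝ
  | 0, r => r 0 ^ (-α)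
  | (k + 1), r =>
      ∫ s in simplexSet (k + 1),
        (r 0 + ∑ i : Fin (k + 1), s i * (r i.succ - r i.castSucc)) ^ (-α)

/-- The point `r_0 + Σ_i s_i (r_i - r_{i-1})`, a convex combination of the `r_i` when `s` lies in the
simplex. -/
noncomputable def simplexPt {m : ℕ} (r : Fin (m + 1) → ℝ) (s : Fin m → ℝ) : ℝ :=
  r 0 + ∑ i : Fin m, s i * (r i.succ - r i.castSucc)

/-- The last coordinate `s_m` of a point of `Δ_m`, with the convention `s_0 = 1`; it bounds the next
coordinate of a point of `Δ_{m+1}`. -/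
def lastCoord {m : ℕ} (s : Fin m → ℝ) : ℝ :=
  (Fin.cons 1 s : Fin (m + 1) → ℝ) (Fin.last m)

/-- The divided difference `f[r_0,…,r_m]` at distinct nodes, in its explicit form. -/
noncomputable def divDiff {m : ℕ} (r : Fin (m + 1) → ℝ) (f : ℝ → ℝ) : ℝ :=
  ∑ i, (∏ j ∈ Finset.univ.erase i, (r i - r j)⁻¹) * f (r i)

/-! ### Divided differences -/

/-- Dropping the node `r_p` amounts to inserting the factor `r_i - r_p` in each term, the term `i = p`
being annihilated by it. -/
lemma divDiff_succAbove {m : ℕ} (r : Fin (m + 2) → ℝ) (hinj : Function.Injective r)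
    (f : ℝ → ℝ) (p : Fin (m + 2)) :
    divDiff (r ∘ p.succAbove) f =
      ∑ i, (∏ j ∈ Finset.univ.erase i, (r i - r j)⁻¹) * (r i - r p) * f (r i) := by
  have key : ∀ {l : ℕ} (i : Fin l) (g : Fin l → ℝ),
      ∏ j ∈ Finset.univ.erase i, g j = ∏ j, if j = i then 1 else g j := by
    intro l i g
    rw [← Finset.mul_prod_erase Finset.univ _ (Finset.mem_univ i), if_pos rfl, one_mul]
    exact Finset.prod_congr rfl fun j hj => (if_neg (Finset.ne_of_mem_erase hj)).symm
  rw [Fin.sum_univ_succAbove _ p]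
  simp only [sub_self, mul_zero, zero_mul, zero_add, divDiff, Function.comp]
  refine Finset.sum_congr rfl fun i _ => ?_
  have hne : r (p.succAbove i) - r p ≠ 0 :=
    sub_ne_zero.2 (hinj.ne (Fin.succAbove_ne p i))
  rw [key, key, Fin.prod_univ_succAbove _ p, if_neg (Fin.succAbove_ne p i).symm]
  simp only [Fin.succAbove_right_inj]
  field_simp

lemma divDiff_succ {m : ℕ} (r : Fin (m + 2) → ℝ) (hinj : Function.Injective r) (f : ℝ → ℝ) :
    divDiff r f =
      (divDiff (r ∘ (Fin.last m).castSucc.succAbove) f - divDiff (r ∘ (Fin.last (m + 1)).succAbove) f)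
        / (r (Fin.last (m + 1)) - r (Fin.last m).castSucc) := by
  have hne : r (Fin.last (m + 1)) - r (Fin.last m).castSucc ≠ 0 :=
    sub_ne_zero.2 (hinj.ne (Fin.castSucc_lt_last _).ne')
  rw [eq_div_iff hne, divDiff_succAbove r hinj, divDiff_succAbove r hinj, ← Finset.sum_sub_distrib,
    divDiff, Finset.sum_mul]
  exact Finset.sum_congr rfl fun i _ => by ring

/-! ### Geometry of the simplex -/

lemma simplexPt_snoc {m : ℕ} (r : Fin (m + 2) → ℝ) (s : Fin (m + 1) → ℝ) :
    simplexPt r s = simplexPt (r ∘ (Fin.last (m + 1)).succAbove) (fun i => s i.castSucc)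
      + s (Fin.last m) * (r (Fin.last (m + 1)) - r (Fin.last m).castSucc) := by
  simp only [simplexPt, Fin.sum_univ_castSucc (n := m), Fin.succAbove_last, Function.comp,
    Fin.succ_last, Fin.castSucc_zero, ← Fin.succ_castSucc]
  ring

/-- Replacing the last node `r_m` by `r_{m+1}` is the same as taking the new coordinate maximal. -/
lemma simplexPt_drop {m : ℕ} (r : Fin (m + 2) → ℝ) (s : Fin m → ℝ) :
    simplexPt (r ∘ (Fin.last m).castSucc.succAbove) s =
      simplexPt (r ∘ (Fin.last (m + 1)).succAbove) s
      + lastCoord s * (r (Fin.last (m + 1)) - r (Fin.last m).castSucc) := by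
  have hlt : ∀ i : Fin m, (Fin.last m).castSucc.succAbove i.castSucc = i.castSucc.castSucc :=
    fun i => Fin.succAbove_of_castSucc_lt _ _ (by simp [Fin.lt_def])
  have hlast : (Fin.last m).castSucc.succAbove (Fin.last m) = Fin.last (m + 1) := by
    rw [Fin.succAbove_of_le_castSucc _ _ le_rfl, Fin.succ_last]
  cases m with
  | zero =>
    have h0 : (0 : Fin 1) = Fin.last 0 := rfl
    simp only [simplexPt, lastCoord, Function.comp, Finset.univ_eq_empty, Finset.sum_empty,
      Fin.succAbove_last, h0, hlast]
    simp
  | succ m =>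
    have hz : (Fin.last (m + 1)).castSucc.succAbove 0 = 0 := hlt 0
    have hu : lastCoord s = s (Fin.last m) := by
      simp [lastCoord, ← Fin.succ_last]
    simp only [simplexPt, Fin.sum_univ_castSucc (n := m), Fin.succAbove_last, Function.comp, hu,
      Fin.succ_last, hlt, hlast, hz, Fin.castSucc_zero, Fin.succ_castSucc]
    ring

lemma mem_simplexSet_succ {m : ℕ} (s : Fin (m + 1) → ℝ) :
    s ∈ simplexSet (m + 1) ↔ (fun i : Fin m => s i.castSucc) ∈ simplexSet m ∧
      s (Fin.last m) ∈ Set.Icc 0 (lastCoord fun i : Fin m => s i.castSucc) := by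
  cases m with
  | zero =>
    simp [simplexSet, lastCoord, Fin.forall_fin_one]
  | succ m =>
    have hu : lastCoord (fun i : Fin (m + 1) => s i.castSucc) = s (Fin.last m).castSucc := by
      simp [lastCoord, ← Fin.succ_last]
    rw [hu]
    constructor
    · rintro ⟨h0, h1, h2⟩
      exact ⟨⟨fun i => h0 _, fun i => h1 _, fun i j hij => h2 _ _ (by simpa using hij)⟩, h0 _,
        h2 _ _ (Fin.le_last _)⟩
    · rintro ⟨⟨h0, h1, h2⟩, h3, h4⟩
      refine ⟨fun i => ?_, fun i => ?_, fun i j hij => ?_⟩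
      · induction i using Fin.lastCases with
        | last => exact h3
        | cast i => exact h0 i
      · induction i using Fin.lastCases with
        | last => exact h4.trans (h1 _)
        | cast i => exact h1 i
      · induction j using Fin.lastCases with
        | last =>
          induction i using Fin.lastCases with
          | last => exact le_rfl
          | cast i => exact h4.trans (h2 _ _ (Fin.le_last i))
        | cast j =>
          induction i using Fin.lastCases with
          | last => exact absurd hij (not_le.2 (Fin.castSucc_lt_last j))
          | cast i => exact h2 i j (by simpa using hij)

lemma lastCoord_nonneg {m : ℕ} {s : Fin m → ℝ} (hs : s ∈ simplexSet m) : 0 ≤ lastCoord s := by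
  cases m with
  | zero => simp [lastCoord]
  | succ m =>
    have hu : lastCoord s = s (Fin.last m) := by simp [lastCoord, ← Fin.succ_last]
    rw [hu]; exact hs.1 _

lemma simplexPt_pos {m : ℕ} (r : Fin (m + 1) → ℝ) (hr : ∀ i, 0 < r i) {s : Fin m → ℝ}
    (hs : s ∈ simplexSet m) : 0 < simplexPt r s := by
  induction m with
  | zero => simpa [simplexPt] using hr 0
  | succ m ih =>
    obtain ⟨hs', h0, h1⟩ := (mem_simplexSet_succ s).1 hs
    have hA := ih (r ∘ (Fin.last (m + 1)).succAbove) (fun i => hr _) hs'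
    have hB := ih (r ∘ (Fin.last m).castSucc.succAbove) (fun i => hr _) hs'
    rw [simplexPt_drop] at hB
    rw [simplexPt_snoc]
    -- The point is affine in the last coordinate and positive at both ends of its range.
    rcases le_total 0 (r (Fin.last (m + 1)) - r (Fin.last m).castSucc) with h | h
    · have := mul_nonneg h0 h
      linarith
    · have := mul_le_mul_of_nonpos_right h1 h
      linarith

lemma isCompact_simplexSet (m : ℕ) : IsCompact (simplexSet m) := by
  have hc : IsClosed (simplexSet m) := by
    have : simplexSet m = (⋂ i, {s | 0 ≤ s i}) ∩ ((⋂ i, {s | s i ≤ 1}) ∩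
        ⋂ i, ⋂ j, ⋂ (_ : i ≤ j), {s | s j ≤ s i}) := by
      ext s; simp [simplexSet]
    rw [this]
    refine (isClosed_iInter fun i => isClosed_le (by fun_prop) (by fun_prop)).inter
      ((isClosed_iInter fun i => isClosed_le (by fun_prop) (by fun_prop)).inter
      (isClosed_iInter fun i => isClosed_iInter fun j => isClosed_iInter fun _ =>
        isClosed_le (by fun_prop) (by fun_prop)))
  refine (isCompact_Icc (a := (0 : Fin m → ℝ)) (b := 1)).of_isClosed_subset hc ?_
  exact fun s hs => ⟨fun i => hs.1 i, fun i => hs.2.1 i⟩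

lemma continuous_simplexPt {m : ℕ} (r : Fin (m + 1) → ℝ) : Continuous (simplexPt r) := by
  unfold simplexPt; fun_prop

lemma integrableOn_simplex {m : ℕ} (r : Fin (m + 1) → ℝ) (hr : ∀ i, 0 < r i) {g : ℝ → ℝ}
    (hg : ContinuousOn g (Set.Ioi 0)) :
    IntegrableOn (fun s => g (simplexPt r s)) (simplexSet m) :=
  (hg.comp (continuous_simplexPt r).continuousOn fun _ hs =>
    simplexPt_pos r hr hs).integrableOn_compact (isCompact_simplexSet m)

/-! ### The Hermite–Genocchi formula -/

/-- Fubini together with the fundamental theorem of calculus in the innermost variable. -/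
lemma integral_simplex_succ {m : ℕ} (r : Fin (m + 2) → ℝ) (hr : ∀ i, 0 < r i)
    (hinj : Function.Injective r) {G g : ℝ → ℝ} (hG : ∀ x, 0 < x → HasDerivAt G (g x) x)
    (hg : ContinuousOn g (Set.Ioi 0)) :
    ∫ s in simplexSet (m + 1), g (simplexPt r s) =
      ((∫ s in simplexSet m, G (simplexPt (r ∘ (Fin.last m).castSucc.succAbove) s)) -
        ∫ s in simplexSet m, G (simplexPt (r ∘ (Fin.last (m + 1)).succAbove) s))
        / (r (Fin.last (m + 1)) - r (Fin.last m).castSucc) := by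
  have hGc : ContinuousOn G (Set.Ioi 0) := fun x hx => (hG x hx).continuousAt.continuousWithinAt
  set d := r (Fin.last (m + 1)) - r (Fin.last m).castSucc with hd
  have hne : d ≠ 0 := sub_ne_zero.2 (hinj.ne (Fin.castSucc_lt_last _).ne')
  set A := simplexPt (r ∘ (Fin.last (m + 1)).succAbove) with hA
  set φ := (simplexSet (m + 1)).indicator (fun s => g (simplexPt r s)) with hφ
  have hmeas := fun l => (isCompact_simplexSet l).isClosed.measurableSet
  have hφ_int : Integrable φ :=
    (integrable_indicator_iff (hmeas _)).2 (integrableOn_simplex r hr hg)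
  have hmp := (volume_preserving_piFinSuccAbove (fun _ : Fin (m + 1) => ℝ) (Fin.last m)).symm
  have hφ_int' := (hmp.integrable_comp_emb (MeasurableEquiv.measurableEmbedding _)).2 hφ_int
  have hval : ∀ (t : ℝ) (s : Fin m → ℝ),
      φ ((MeasurableEquiv.piFinSuccAbove (fun _ : Fin (m + 1) => ℝ) (Fin.last m)).symm (t, s)) =
      (simplexSet m).indicator (fun s => (Set.Icc 0 (lastCoord s)).indicator
        (fun t => g (A s + t * d)) t) s := by
    intro t s
    have e1 : (MeasurableEquiv.piFinSuccAbove (fun _ : Fin (m + 1) => ℝ) (Fin.last m)).symm (t, s)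
        = (Fin.snoc s t : Fin (m + 1) → ℝ) := by
      simp [MeasurableEquiv.piFinSuccAbove, Fin.insertNthEquiv, Fin.insertNth_last']
    have e2 := mem_simplexSet_succ (Fin.snoc s t : Fin (m + 1) → ℝ)
    have e3 := simplexPt_snoc r (Fin.snoc s t : Fin (m + 1) → ℝ)
    simp only [Fin.snoc_castSucc, Fin.snoc_last] at e2 e3
    rw [e1, hφ]
    by_cases h1 : s ∈ simplexSet m
    · by_cases h2 : t ∈ Set.Icc 0 (lastCoord s)
      · rw [Set.indicator_of_mem (e2.2 ⟨h1, h2⟩), Set.indicator_of_mem h1,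
          Set.indicator_of_mem h2, e3]
      · rw [Set.indicator_of_notMem fun h => h2 (e2.1 h).2, Set.indicator_of_mem h1,
          Set.indicator_of_notMem h2]
    · rw [Set.indicator_of_notMem fun h => h1 (e2.1 h).1, Set.indicator_of_notMem h1]
  have hinner : ∀ s ∈ simplexSet m,
      ∫ t, (Set.Icc 0 (lastCoord s)).indicator (fun t => g (A s + t * d)) t =
      (G (simplexPt (r ∘ (Fin.last m).castSucc.succAbove) s) - G (A s)) / d := by
    intro s hs
    have hu := lastCoord_nonneg hs
    have hpos : ∀ t ∈ Set.Icc 0 (lastCoord s), 0 < A s + t * d := by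
      intro t ht
      have h := simplexPt_pos r hr (s := Fin.snoc s t)
        ((mem_simplexSet_succ _).2 (by simpa using ⟨hs, ht⟩))
      rw [simplexPt_snoc] at h
      simpa only [Fin.snoc_castSucc, Fin.snoc_last] using h
    rw [integral_indicator measurableSet_Icc, integral_Icc_eq_integral_Ioc,
      ← intervalIntegral.integral_of_le hu, simplexPt_drop]
    have hder : ∀ t ∈ Set.uIcc 0 (lastCoord s),
        HasDerivAt (fun t => G (A s + t * d) / d) (g (A s + t * d)) t := by
      intro t ht
      rw [Set.uIcc_of_le hu] at ht
      have h1 : HasDerivAt (fun t : ℝ => A s + t * d) d t := by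
        simpa using ((hasDerivAt_id t).mul_const d).const_add (A s)
      have h2 := ((hG _ (hpos t ht)).comp t h1).div_const d
      rwa [mul_div_cancel_right₀ _ hne] at h2
    rw [intervalIntegral.integral_eq_sub_of_hasDerivAt hder]
    · simp only [zero_mul, add_zero]
      rw [sub_div]
    · apply ContinuousOn.intervalIntegrable
      rw [Set.uIcc_of_le hu]
      exact hg.comp (by fun_prop) hpos
  rw [← integral_indicator (hmeas _), ← hmp.integral_comp (MeasurableEquiv.measurableEmbedding _),
    Measure.volume_eq_prod]
  refine (integral_prod_symm _ hφ_int').trans ?_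
  simp only [Function.comp, hval]
  have hout : ∀ s, ∫ t, (simplexSet m).indicator (fun s => (Set.Icc 0 (lastCoord s)).indicator
        (fun t => g (A s + t * d)) t) s = (simplexSet m).indicator (fun s =>
      (G (simplexPt (r ∘ (Fin.last m).castSucc.succAbove) s) - G (A s)) / d) s := by
    intro s
    by_cases hs : s ∈ simplexSet m
    · simp only [Set.indicator_of_mem hs, hinner s hs]
    · simp [Set.indicator_of_notMem hs]
  simp only [hout]
  rw [integral_indicator (hmeas _), integral_div, integral_sub]
  · exact integrableOn_simplex _ (fun i => hr _) hGc
  · exact integrableOn_simplex _ (fun i => hr _) hGc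

/-- Hermite–Genocchi: `F p` plays the role of the `p`-th derivative of `F 0` on `(0, ∞)`. -/
theorem hermite_genocchi {m : ℕ} (r : Fin (m + 1) → ℝ) (hr : ∀ i, 0 < r i)
    (hinj : Function.Injective r) (F : ℕ → ℝ → ℝ)
    (hF : ∀ p x, 0 < x → HasDerivAt (F p) (F (p + 1) x) x) :
    ∫ s in simplexSet m, F m (simplexPt r s) = divDiff r (F 0) := by
  induction m with
  | zero =>
    have : simplexSet 0 = Set.univ := by ext s; simp [simplexSet]
    rw [this, Measure.restrict_univ, Measure.volume_pi_eq_dirac 0, integral_dirac]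
    simp [simplexPt, divDiff]
  | succ m ih =>
    rw [integral_simplex_succ r hr hinj (hF m)
      fun x hx => (hF (m + 1) x hx).continuousAt.continuousWithinAt,
      ih (r ∘ (Fin.last m).castSucc.succAbove) (fun i => hr _)
        (hinj.comp Fin.succAbove_right_injective),
      ih (r ∘ (Fin.last (m + 1)).succAbove) (fun i => hr _)
        (hinj.comp Fin.succAbove_right_injective), ← divDiff_succ r hinj]

/-! ### Iterated derivatives of `x ^ j * log x` -/

/-- The successive derivatives of `x^j (log x + c)`. The constant `c` makes the family stable under
differentiation up to scalars, which allows induction on `j`. -/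
lemma exists_derivs (j : ℕ) (c : ℝ) : ∃ F : ℕ → ℝ → ℝ,
    (∀ p x, 0 < x → HasDerivAt (F p) (F (p + 1) x) x) ∧
    (∀ x, F 0 x = x ^ j * (Real.log x + c)) ∧
    ∀ n x, F (n + (j + 1)) x = (j.factorial : ℝ) * ((-1) ^ n * n.factorial) * (x ^ (n + 1))⁻¹ := by
  induction j generalizing c with
  | zero =>
    refine ⟨fun p x => Nat.casesOn p (Real.log x + c)
      fun q => ((-1) ^ q * q.factorial) * (x ^ (q + 1))⁻¹, ?_, by simp, by simp⟩
    rintro (_ | p) x hx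
    · simpa using (Real.hasDerivAt_log hx.ne').add_const c
    · have h := ((hasDerivAt_pow (p + 1) x).inv (pow_ne_zero _ hx.ne')).const_mul
        ((-1 : ℝ) ^ p * p.factorial)
      refine h.congr_deriv ?_
      have := hx.ne'
      simp only [Nat.factorial_succ, Nat.add_sub_cancel]
      push_cast
      field_simp
      ring
  | succ j ih =>
    obtain ⟨F, h1, h2, h3⟩ := ih (c + 1 / (j + 1))
    refine ⟨fun p x => Nat.casesOn p (x ^ (j + 1) * (Real.log x + c))
      fun q => (j + 1) * F q x, ?_, by simp, fun n x => ?_⟩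
    · rintro (_ | p) x hx
      · have h := (hasDerivAt_pow (j + 1) x).mul ((Real.hasDerivAt_log hx.ne').add_const c)
        refine h.congr_deriv ?_
        have := hx.ne'
        have hj : (j : ℝ) + 1 ≠ 0 := by positivity
        simp only [h2, Nat.add_sub_cancel]
        push_cast
        field_simp
        ring
      · exact (h1 p x hx).const_mul _
    · change ((j : ℝ) + 1) * F (n + (j + 1)) x = _
      rw [h3, Nat.factorial_succ]
      push_cast
      ring

/-- Case 1 (`d` even, `d/2 ≤ r`): for every `n ≥ 0`, `k ≥ 1`, and pairwise distinct strictly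
positive `r_0,…,r_{n+k}`,
`I_{n+1,n+k}(r_0,…,r_{n+k})
  = [(-1)^n / (n! (k-1)!)] Σ_i [∏_{j≠i}(r_i-r_j)⁻¹] r_i^{k-1} log r_i`. -/
theorem heatI_log_case (n k : ℕ) (hk : 1 ≤ k) (r : Fin (n + k + 1) → ℝ)
    (hr : ∀ i, 0 < r i) (hinj : Function.Injective r) :
    heatI ((n : ℝ) + 1) (n + k) r
      = ((-1 : ℝ) ^ n / ((n.factorial : ℝ) * ((k - 1).factorial : ℝ))) *
        ∑ i, (∏ j ∈ Finset.univ.erase i, (r i - r j)⁻¹) * (r i ^ (k - 1) * Real.log (r i)) := by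
  obtain ⟨k, rfl⟩ : ∃ l, k = l + 1 := ⟨k - 1, by omega⟩
  obtain ⟨F, h1, h2, h3⟩ := exists_derivs k 0
  have hHG := hermite_genocchi r hr hinj F h1
  have hI : heatI ((n : ℝ) + 1) (n + (k + 1)) r =
      ∫ s in simplexSet (n + (k + 1)), (simplexPt r s) ^ (-((n : ℝ) + 1)) := rfl
  have hL : ∫ s in simplexSet (n + (k + 1)), F (n + (k + 1)) (simplexPt r s) =
      ((k.factorial : ℝ) * ((-1) ^ n * n.factorial)) * heatI ((n : ℝ) + 1) (n + (k + 1)) r := by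
    rw [hI, ← integral_const_mul]
    refine setIntegral_congr_fun (isCompact_simplexSet _).isClosed.measurableSet fun s hs => ?_
    have hp := simplexPt_pos r hr hs
    change F (n + (k + 1)) (simplexPt r s) = _ * simplexPt r s ^ (-((n : ℝ) + 1))
    rw [h3, Real.rpow_neg hp.le]
    norm_cast
  rw [hL, divDiff] at hHG
  simp only [h2, add_zero] at hHG
  rw [Nat.add_sub_cancel, ← hHG, ← mul_assoc]
  have hs : ((-1 : ℝ) ^ n) * (-1) ^ n = 1 := by rw [← mul_pow]; simp
  have hone : (-1 : ℝ) ^ n / (n.factorial * k.factorial) *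
      ((k.factorial : ℝ) * ((-1) ^ n * n.factorial)) = 1 := by
    field_simp
    linear_combination hs
  rw [hone, one_mul]
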